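/- Let q be a power of a prime p, let k be a positive integer with k ≡ 2 (mod 4) and k > 2, and let D = {x ∈ F_{q^k}^* : Tr_{q^2/q}(x^{(q^k-1)/(q^2-1)}) = 0}. Then #{b ∈ F_{q^k}^* : w(c_b) = (q-1)(q^{k-1} − q^{k/2})/(q+1)} = (q^k - 1)/(q+1) and #{b ∈ F_{q^k}^* : w(c_b) = (q-1)(q^{k-1} + q^{k/2 - 1})/(q+1)} = q(q^k - 1)/(q+1); in particular every nonzero codeword of C_D has one of these two weights, and the minimum distance of C_D is (q-1)(q^{k-1} − q^{k/2})/(q+1). -/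

import Mathlib

/-!
Write `q = |F|`, `|E| = q²`, `|K| = q^{2m}` and `h = (|K| - 1) / (q + 1)`. The defining set `D` is
`{d | d ^ h = -1}`, so it is parametrised `q + 1` to one by `y ↦ a y^{q + 1}`, where `a ^ h = -1`.
Hence `(q + 1) w(c_b)` is the number of `y` with `Q y ≠ 0` for the Hermitian form
`Q y = Tr_{K/F}(a b y^{q + 1})` over `E / F`.

For a Hermitian form `Q` on an `E`-space `V` of dimension `m` with radical of dimension `r`, let
`S = ∑ ψ(Q v)` for a nontrivial additive character `ψ` of `F`. Norms from `E` to `F` are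
surjective, so `S` does not change when `Q` is scaled. Therefore `S` is real, with
`S² = |V| |rad Q| = q^{2(m + r)}`, and it determines the number of zeros of `Q`. The free action of
`Eˣ` on the vectors with `Q v ≠ 0` gives `S ≡ 1 (mod q + 1)`, which fixes the sign:
`S = (-q)^{m + r}`.

The radical of `y ↦ Tr_{K/F}(c y^{q + 1})` is the set of zeros of `c^q u^{q²} + c u`. It has
dimension at most one, and it is nonzero exactly when `c ^ h = (-1) ^ m`.
-/

open Module QuadraticMap

section PowerMap

variable {K : Type*} [Field K]

lemma card_subtype_eq_card_units {P : K → Prop} (hP : ¬ P 0) :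
    Nat.card {x : K // P x} = Nat.card {u : Kˣ // P u} :=
  Nat.card_congr <| .symm <|
    (unitsEquivNeZero.subtypeEquiv (q := fun x : {x : K // x ≠ 0} => P x) fun _ => Iff.rfl).trans
      (Equiv.subtypeSubtypeEquivSubtype fun hx h0 => hP (h0 ▸ hx))

variable [Finite K] {d h : ℕ}

lemma pow_exponents_ne_zero (hdh : d * h = Nat.card K - 1) : d ≠ 0 ∧ h ≠ 0 := by
  have := Finite.one_lt_card (α := K)
  exact mul_ne_zero_iff.1 (by omega)

lemma card_pow_eq_one (hdh : d * h = Nat.card K - 1) : Nat.card {y : K // y ^ d = 1} = d := by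
  have hd := (pow_exponents_ne_zero hdh).1
  have hker : Nat.card (powMonoidHom d : Kˣ →* Kˣ).ker = d := by
    rw [IsCyclic.card_powMonoidHom_ker, Nat.card_units, ← hdh, Nat.gcd_mul_right_left]
  refine (card_subtype_eq_card_units (by simp [hd])).trans (.trans (Nat.card_congr ?_) hker)
  exact Equiv.subtypeEquivRight fun u => by simp [MonoidHom.mem_ker, Units.ext_iff]

lemma exists_pow_eq_iff (hdh : d * h = Nat.card K - 1) {x : K} (hx : x ≠ 0) :
    (∃ y, y ^ d = x) ↔ x ^ h = 1 := by
  have hrange : (powMonoidHom d : Kˣ →* Kˣ).range = (powMonoidHom h).ker := by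
    obtain ⟨hd, hh⟩ := pow_exponents_ne_zero hdh
    apply Subgroup.eq_of_le_of_card_ge
    · rintro _ ⟨y, rfl⟩
      simp [MonoidHom.mem_ker, ← pow_mul, hdh, ← Nat.card_units]
    · rw [IsCyclic.card_powMonoidHom_range, IsCyclic.card_powMonoidHom_ker, Nat.card_units, ← hdh,
        Nat.gcd_mul_right_left, Nat.gcd_mul_left_left, Nat.mul_div_cancel_left h (by omega)]
  have hmem : Units.mk0 x hx ∈ (powMonoidHom h : Kˣ →* Kˣ).ker ↔ x ^ h = 1 := by
    simp [MonoidHom.mem_ker, Units.ext_iff]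
  rw [← hmem, ← hrange]
  constructor
  · rintro ⟨y, rfl⟩
    have hy : y ≠ 0 := by
      rintro rfl
      simp [(pow_exponents_ne_zero hdh).1] at hx
    exact ⟨Units.mk0 y hy, Units.ext rfl⟩
  · rintro ⟨y, hy⟩
    exact ⟨y, congrArg Units.val hy⟩

lemma card_pow_eq (hdh : d * h = Nat.card K - 1) {x : K} (hxh : x ^ h = 1) :
    Nat.card {y : K // y ^ d = x} = d := by
  have hx : x ≠ 0 := by
    rintro rfl
    simp [(pow_exponents_ne_zero hdh).2] at hxh
  obtain ⟨r, rfl⟩ := (exists_pow_eq_iff hdh hx).2 hxh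
  have hr : r ≠ 0 := by
    rintro rfl
    simp [(pow_exponents_ne_zero hdh).1] at hx
  refine .trans (Nat.card_congr (.symm ?_)) (card_pow_eq_one hdh)
  exact (Equiv.mulLeft₀ r hr).subtypeEquiv fun y => by simp [mul_pow, hx]

lemma card_ne_zero_and_pow_ne (hdh : d * h = Nat.card K - 1) {x : K} (hxh : x ^ h = 1) :
    Nat.card {y : K // y ≠ 0 ∧ y ^ d ≠ x} = Nat.card K - 1 - d := by
  have hx : x ≠ 0 := by
    rintro rfl
    simp [(pow_exponents_ne_zero hdh).2] at hxh
  have hsub : {y : K | y ^ d = x} ⊆ {0}ᶜ := by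
    rintro y rfl rfl
    simp [(pow_exponents_ne_zero hdh).1] at hx
  calc Nat.card {y : K // y ≠ 0 ∧ y ^ d ≠ x} = ({0}ᶜ \ {y : K | y ^ d = x}).ncard := rfl
    _ = Nat.card K - 1 - d := by
      rw [Set.ncard_sdiff hsub, Set.ncard_compl, Set.ncard_singleton]
      exact congrArg _ (card_pow_eq hdh hxh)

lemma card_comp_mul_pow (hdh : d * h = Nat.card K - 1) {a : K} (ha : a ≠ 0) {P : K → Prop}
    (hP : ¬ P 0) :
    Nat.card {y : K // P (a * y ^ d)} = d * Nat.card {x : K // x ^ h = a ^ h ∧ P x} := by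
  have hd := (pow_exponents_ne_zero hdh).1
  have hmaps (y : {y : K // P (a * y ^ d)}) : (a * y.1 ^ d) ^ h = a ^ h := by
    have hy : y.1 ≠ 0 := fun hy => hP (by simpa [hy, hd] using y.2)
    rw [mul_pow, (exists_pow_eq_iff hdh (pow_ne_zero d hy)).1 ⟨_, rfl⟩, mul_one]
  let f (y : {y : K // P (a * y ^ d)}) : {x : K // x ^ h = a ^ h ∧ P x} := ⟨_, hmaps y, y.2⟩
  have hfiber (x) : Nat.card {y // f y = x} = d := by
    have hx : (x.1 / a) ^ h = 1 := by rw [div_pow, x.2.1, div_self (pow_ne_zero h ha)]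
    have hfx (y) : f y = x ↔ y.1 ^ d = x.1 / a := by
      rw [Subtype.ext_iff, eq_div_iff ha, mul_comm]
    have hPx {y : K} (hy : y ^ d = x.1 / a) : P (a * y ^ d) := by
      rw [hy, mul_div_cancel₀ _ ha]
      exact x.2.2
    refine .trans (Nat.card_congr ?_) (card_pow_eq hdh hx)
    exact (Equiv.subtypeEquivRight hfx).trans (Equiv.subtypeSubtypeEquivSubtype hPx)
  have := Fintype.ofFinite {x : K // x ^ h = a ^ h ∧ P x}
  rw [← Nat.card_congr (Equiv.sigmaFiberEquiv f), Nat.card_sigma]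
  simp [hfiber, mul_comm]

end PowerMap

section CharacterSum

variable {F : Type*} [Field F] {ψ : AddChar F ℂ}

lemma sum_addChar_quadraticForm_mul_sum_inv {V : Type*} [AddCommGroup V] [Module F V] [Fintype V]
    (Q : QuadraticForm F V) [Fintype (polarBilin Q).ker] (hψ : ψ ≠ 1) :
    (∑ x, ψ (Q x)) * ∑ x, ψ⁻¹ (Q x) =
      Nat.card V * ∑ u : (polarBilin Q).ker, ψ (Q u) := by
  classical
  have hpolar (u z : V) : ψ (Q (u + z)) * ψ⁻¹ (Q z) = ψ (Q u) * ψ (polarBilin Q u z) := by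
    simp_rw [AddChar.inv_apply, ← AddChar.map_add_eq_mul, polarBilin_apply_apply, polar]
    congr 1
    ring
  have hinner (u : V) : ∑ z, ψ (polarBilin Q u z) =
      if u ∈ (polarBilin Q).ker then (Nat.card V : ℂ) else 0 := by
    split_ifs with hu
    · simp [LinearMap.mem_ker.1 hu]
    · obtain ⟨t, ht⟩ := AddChar.ne_one_iff.1 hψ
      obtain ⟨z, rfl⟩ := LinearMap.surjective hu t
      have hχ : ψ.compAddMonoidHom (polarBilin Q u).toAddMonoidHom ≠ 1 :=
        AddChar.ne_one_iff.2 ⟨z, ht⟩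
      exact AddChar.sum_eq_zero_of_ne_one hχ
  calc (∑ x, ψ (Q x)) * ∑ x, ψ⁻¹ (Q x)
      = ∑ z, ∑ u, ψ (Q (u + z)) * ψ⁻¹ (Q z) := by
        rw [Finset.sum_mul_sum, Finset.sum_comm]
        exact Finset.sum_congr rfl fun z _ =>
          (Equiv.sum_comp (Equiv.addRight z) fun x => ψ (Q x) * ψ⁻¹ (Q z)).symm
    _ = ∑ u, ψ (Q u) * ∑ z, ψ (polarBilin Q u z) := by
        rw [Finset.sum_comm]
        simp_rw [Finset.mul_sum, hpolar]
    _ = Nat.card V * ∑ u : (polarBilin Q).ker, ψ (Q u) := by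
        simp_rw [hinner, mul_ite, mul_zero]
        rw [← Finset.sum_filter, ← Finset.sum_mul, mul_comm]
        congr 1
        exact Finset.sum_subtype _ (by simp) _

variable [Fintype F] {X : Type*} [Fintype X]

lemma sum_sum_addChar_mul (f : X → F) (hψ : ψ ≠ 1) :
    ∑ t, ∑ x, ψ (t * f x) = Fintype.card F * Nat.card {x // f x = 0} := by
  classical
  rw [Finset.sum_comm]
  simp_rw [AddChar.sum_mulShift _ (AddChar.IsPrimitive.of_ne_one hψ)]
  simp [Fintype.card_subtype, ← Finset.sum_filter, mul_comm]

lemma sub_one_mul_eq_of_sum_addChar_mul_eq (f : X → F) (hψ : ψ ≠ 1) {S : ℂ}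
    (hS : ∀ t ≠ 0, ∑ x, ψ (t * f x) = S) :
    ((Fintype.card F : ℂ) - 1) * S =
      ((Fintype.card F : ℂ) - 1) * Nat.card X - Fintype.card F * Nat.card {x // f x ≠ 0} := by
  classical
  have htot := sum_sum_addChar_mul f hψ
  rw [← Finset.add_sum_erase _ _ (Finset.mem_univ 0),
    Finset.sum_congr rfl fun t ht => hS t (Finset.ne_of_mem_erase ht)] at htot
  have hsplit : (Nat.card {x // f x = 0} : ℂ) + Nat.card {x // f x ≠ 0} = Nat.card X := by
    norm_cast
    simp [Fintype.card_subtype, Finset.card_filter_add_card_filter_not]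
  simp only [zero_mul, AddChar.map_zero_eq_one, Finset.sum_const, Finset.card_erase_of_mem,
    Finset.mem_univ, Finset.card_univ, nsmul_eq_mul, mul_one, Nat.card_eq_fintype_card,
    Nat.cast_sub Fintype.card_pos, Nat.cast_one] at htot hsplit ⊢
  linear_combination htot + (Fintype.card F : ℂ) * hsplit

end CharacterSum

lemma eq_neg_pow_of_sq_eq_of_modEq_one {q r : ℕ} (hq : 1 < q) {s : ℤ}
    (hsq : s ^ 2 = (q : ℤ) ^ (2 * r)) (hmod : s ≡ 1 [ZMOD q + 1]) : s = (-q) ^ r := by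
  have hpow : (-q : ℤ) ^ r ≡ 1 [ZMOD q + 1] := by
    have : (-q : ℤ) ≡ 1 [ZMOD q + 1] := Int.modEq_iff_dvd.2 ⟨1, by ring⟩
    simpa using this.pow r
  have hsq' : s ^ 2 = ((-q : ℤ) ^ r) ^ 2 := by rw [hsq, pow_mul, ← neg_sq, pow_right_comm]
  refine (sq_eq_sq_iff_eq_or_eq_neg.1 hsq').resolve_right fun hneg => ?_
  have hdvd : (q : ℤ) + 1 ∣ 2 := by
    have := hmod.symm.trans (hneg ▸ hpow.neg)
    simpa using (this.symm).dvd
  have := Int.le_of_dvd two_pos hdvd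
  omega

section HermitianForm

variable {F V : Type*} [Field F] [AddCommGroup V] [Module F V]

/-- `Q` is the quadratic form `v ↦ H(v, v)` of a Hermitian form `H` over `E`. For a quadratic
extension `E / F` this is encoded by the way `Q` scales along `E`, so that `H` never has to be
constructed. -/
def IsHermitianForm (E : Type*) [Field E] [Algebra F E] [Module E V] (Q : QuadraticForm F V) :
    Prop :=
  ∀ (a : E) (v : V), Q (a • v) = Algebra.norm F a * Q v

variable {E : Type*} [Field E] [Algebra F E] [Module E V]

lemma norm_one_add_of_finrank_eq_two (hE : finrank F E = 2) (a : E) :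
    Algebra.norm F (1 + a) = 1 + Algebra.trace F E a + Algebra.norm F a := by
  have : FiniteDimensional F E := .of_finrank_pos (by omega)
  let b := finBasisOfFinrankEq F E hE
  simp only [Algebra.norm_eq_matrix_det b, Algebra.trace_eq_matrix_trace b, map_add, map_one,
    Matrix.det_fin_two, Matrix.trace_fin_two, Matrix.add_apply, Matrix.one_apply_eq, ne_eq,
    zero_ne_one, one_ne_zero, not_false_eq_true, Matrix.one_apply_ne]
  ring

lemma natCard_eq_card_sq [Fintype F] (hE : finrank F E = 2) :
    Nat.card E = Fintype.card F ^ 2 := by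
  have : FiniteDimensional F E := .of_finrank_pos (by omega)
  rw [Module.natCard_eq_pow_finrank (K := F), hE, Nat.card_eq_fintype_card]

lemma natCard_eq_card_pow [Fintype F] (hE : finrank F E = 2) (W : Type*) [AddCommGroup W]
    [Module E W] [Finite W] : Nat.card W = Fintype.card F ^ (2 * finrank E W) := by
  rw [Module.natCard_eq_pow_finrank (K := E), natCard_eq_card_sq hE, pow_mul]

namespace IsHermitianForm

variable {Q : QuadraticForm F V}

/-- The radical of a Hermitian form, as a subspace over the larger field `E`. -/
def radical (hQ : IsHermitianForm E Q) : Submodule E V where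
  __ := Q.radical
  smul_mem' a u hu := by
    simp only [AddSubsemigroup.mem_carrier, AddSubmonoid.mem_toSubsemigroup,
      Submodule.mem_toAddSubmonoid] at hu ⊢
    obtain rfl | ha := eq_or_ne a 0
    · simp
    rw [mem_radical_iff'] at hu ⊢
    refine ⟨by rw [hQ, hu.1, mul_zero], fun v => ?_⟩
    rw [← smul_inv_smul₀ ha v, ← smul_add, hQ, hQ, hu.2]

lemma polar_smul_self (hQ : IsHermitianForm E Q) (hE : finrank F E = 2) (a : E) (u : V) :
    polar Q u (a • u) = Algebra.trace F E a * Q u := by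
  have h : u + a • u = (1 + a) • u := by rw [add_smul, one_smul]
  rw [polar, h, hQ, hQ, norm_one_add_of_finrank_eq_two hE]
  ring

lemma mem_radical_iff [Algebra.IsSeparable F E] (hQ : IsHermitianForm E Q)
    (hE : finrank F E = 2) {u : V} : u ∈ hQ.radical ↔ ∀ v, polar Q u v = 0 := by
  have : FiniteDimensional F E := .of_finrank_pos (by omega)
  refine ⟨fun hu v => LinearMap.congr_fun hu.2 v, fun hu => ⟨?_, LinearMap.ext hu⟩⟩
  obtain ⟨a, ha⟩ := Algebra.trace_surjective F E 1
  have := hQ.polar_smul_self hE a u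
  rwa [hu, ha, one_mul, eq_comm] at this

lemma card_sub_one_dvd_card_ne_zero [Finite E] (hQ : IsHermitianForm E Q) :
    Nat.card E - 1 ∣ Nat.card {v // Q v ≠ 0} := by
  let X : SubMulAction Eˣ V :=
    { carrier := {v | Q v ≠ 0}
      smul_mem' := fun a v hv => by
        rw [Set.mem_ofPred_eq, Units.smul_def, hQ]
        exact mul_ne_zero (by simp) hv }
  have hfree (v : X) : MulAction.stabilizer Eˣ v = ⊥ := by
    have hv : v.1 ≠ 0 := fun h => v.2 (by rw [h, map_zero])
    refine (Subgroup.eq_bot_iff_forall _).2 fun a ha => ?_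
    have hav : (a : E) • v.1 = v.1 := congrArg Subtype.val ha
    exact Units.ext (smul_left_injective E hv (by simpa using hav))
  have := Nat.card_congr (MulAction.selfEquivOrbitsQuotientProd hfree)
  rw [Nat.card_prod, Nat.card_units] at this
  exact ⟨_, this.trans (mul_comm _ _)⟩

section CharacterSum

variable [Finite E] [Fintype V]

lemma sum_addChar_mul (hQ : IsHermitianForm E Q) (ψ : AddChar F ℂ) {t : F} (ht : t ≠ 0) :
    ∑ v, ψ (t * Q v) = ∑ v, ψ (Q v) := by
  obtain ⟨a, rfl⟩ := FiniteField.norm_surjective F E t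
  have ha : a ≠ 0 := by
    rintro rfl
    simp at ht
  simp_rw [← hQ a]
  exact Equiv.sum_comp (MulAction.toPerm (Units.mk0 a ha)) fun v => ψ (Q v)

variable {ψ : AddChar F ℂ}

lemma sum_addChar_sq (hQ : IsHermitianForm E Q) (hE : finrank F E = 2) (hψ : ψ ≠ 1) :
    (∑ v, ψ (Q v)) ^ 2 = Nat.card V * Nat.card hQ.radical := by
  classical
  have : Finite F := .of_injective _ (algebraMap F E).injective
  have hinv : ∑ v, ψ⁻¹ (Q v) = ∑ v, ψ (Q v) := by
    simpa [AddChar.inv_apply] using hQ.sum_addChar_mul ψ (neg_ne_zero.2 one_ne_zero)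
  have hker (u : V) : u ∈ (polarBilin Q).ker ↔ u ∈ hQ.radical :=
    LinearMap.ext_iff.trans (hQ.mem_radical_iff hE).symm
  have hψu (u : (polarBilin Q).ker) : ψ (Q u) = 1 := by
    have hu : Q u = 0 := ((hker u).1 u.2).1
    rw [hu, AddChar.map_zero_eq_one]
  calc (∑ v, ψ (Q v)) ^ 2 = (∑ v, ψ (Q v)) * ∑ v, ψ⁻¹ (Q v) := by rw [hinv, pow_two]
    _ = Nat.card V * Nat.card (polarBilin Q).ker := by
        rw [sum_addChar_quadraticForm_mul_sum_inv Q hψ]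
        simp [hψu]
    _ = Nat.card V * Nat.card hQ.radical := by
        rw [Nat.card_congr (Equiv.subtypeEquivRight hker)]

variable [Fintype F]

theorem sum_addChar_eq (hQ : IsHermitianForm E Q) (hE : finrank F E = 2) (hψ : ψ ≠ 1) :
    ∑ v, ψ (Q v) = (-(Fintype.card F : ℂ)) ^ (finrank E V + finrank E hQ.radical) := by
  set q := Fintype.card F with hq
  have hq1 : 1 < q := Fintype.one_lt_card
  obtain ⟨w, hw⟩ := hQ.card_sub_one_dvd_card_ne_zero
  set s : ℤ := (q : ℤ) ^ (2 * finrank E V) - q * (q + 1) * w with hs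
  have hS : ∑ v, ψ (Q v) = s := by
    have hq0 : (q : ℂ) - 1 ≠ 0 := sub_ne_zero.2 (by exact_mod_cast hq1.ne')
    have hsum := sub_one_mul_eq_of_sum_addChar_mul_eq Q hψ fun t ht => hQ.sum_addChar_mul ψ ht
    rw [hw, natCard_eq_card_pow hE V, natCard_eq_card_sq hE, ← hq] at hsum
    push_cast [Nat.one_le_pow 2 q (by omega)] at hsum
    refine mul_left_cancel₀ hq0 (hsum.trans ?_)
    push_cast [hs]
    ring
  have hsq : s ^ 2 = (q : ℤ) ^ (2 * (finrank E V + finrank E hQ.radical)) := by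
    have hsum := hQ.sum_addChar_sq hE hψ
    rw [hS, natCard_eq_card_pow hE, natCard_eq_card_pow hE, ← Nat.cast_mul, ← pow_add,
      ← mul_add] at hsum
    exact_mod_cast hsum
  have hmod : s ≡ 1 [ZMOD q + 1] := by
    have hq2 : (q : ℤ) ^ 2 ≡ 1 [ZMOD q + 1] := Int.modEq_iff_dvd.2 ⟨1 - q, by ring⟩
    have hqw : (q : ℤ) * (q + 1) * w ≡ 0 [ZMOD q + 1] :=
      Int.modEq_zero_iff_dvd.2 ⟨q * w, by ring⟩
    simpa [hs, pow_mul] using (hq2.pow (finrank E V)).sub hqw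
  rw [hS, eq_neg_pow_of_sq_eq_of_modEq_one hq1 hsq hmod]
  push_cast
  rfl

end CharacterSum

theorem card_mul_card_ne_zero [Fintype F] [Finite V] (hQ : IsHermitianForm E Q)
    (hE : finrank F E = 2) :
    (Fintype.card F : ℤ) * Nat.card {v // Q v ≠ 0} =
      ((Fintype.card F : ℤ) - 1) * ((Fintype.card F : ℤ) ^ (2 * finrank E V) -
        (-(Fintype.card F : ℤ)) ^ (finrank E V + finrank E hQ.radical)) := by
  have : FiniteDimensional F E := .of_finrank_pos (by omega)
  have : Finite E := Module.finite_of_finite F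
  have := Fintype.ofFinite V
  obtain ⟨ψ, hψ⟩ : ∃ ψ : AddChar F ℂ, ψ ≠ 1 :=
    ⟨_, by simpa using AddChar.FiniteField.primitiveChar_to_Complex_isPrimitive F one_ne_zero⟩
  have hsum := sub_one_mul_eq_of_sum_addChar_mul_eq Q hψ fun t ht => hQ.sum_addChar_mul ψ ht
  rw [hQ.sum_addChar_eq hE hψ, natCard_eq_card_pow hE V] at hsum
  have hsum' : ((Fintype.card F : ℤ) - 1) *
      (-(Fintype.card F : ℤ)) ^ (finrank E V + finrank E hQ.radical) =
      ((Fintype.card F : ℤ) - 1) * (Fintype.card F : ℤ) ^ (2 * finrank E V) -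
        Fintype.card F * Nat.card {v // Q v ≠ 0} := by
    exact_mod_cast hsum
  linear_combination hsum'

end IsHermitianForm

end HermitianForm

section NegOne

variable (F : Type*) [Field F] [Fintype F] {K : Type*} [Field K] [Algebra F K]

lemma neg_one_pow_card_add_one : (-1 : K) ^ (Fintype.card F + 1) = 1 := by
  have hfrob : (-1 : K) ^ Fintype.card F = -1 := by
    simpa using map_neg (FiniteField.frobeniusAlgHom F K) 1
  rw [pow_succ, hfrob, neg_one_mul, neg_neg]

lemma neg_one_pow_pow_card_add_one (n : ℕ) : ((-1 : K) ^ n) ^ (Fintype.card F + 1) = 1 := by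
  rw [pow_right_comm, neg_one_pow_card_add_one F, one_pow]

end NegOne

section FiniteFieldTower

variable {F E K : Type*} [Field F] [Field E] [Field K] [Finite K] [Algebra E K]

lemma mem_range_algebraMap_of_pow_natCard_eq {x : K} (hx : x ^ Nat.card E = x) :
    x ∈ Set.range (algebraMap E K) := by
  have : Finite E := .of_injective _ (algebraMap E K).injective
  have := Fintype.ofFinite E
  refine (IsGalois.mem_range_algebraMap_iff_fixed x).2 fun σ => ?_
  obtain ⟨n, rfl⟩ := (FiniteField.bijective_frobeniusAlgEquivOfAlgebraic_pow E K).2 σ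
  rw [Nat.card_eq_fintype_card] at hx
  rw [AlgEquiv.coe_pow]
  exact Function.IsFixedPt.iterate hx n

variable [Algebra F E]

lemma finite_of_finrank_eq_two [Finite F] (hE : finrank F E = 2) : Finite E :=
  have : FiniteDimensional F E := .of_finrank_pos (by omega)
  Module.finite_of_finite F

variable [Fintype F]

lemma algebraMap_norm_eq_pow_card_add_one (hE : finrank F E = 2) (a : E) :
    algebraMap F E (Algebra.norm F a) = a ^ (Fintype.card F + 1) := by
  have := finite_of_finrank_eq_two hE
  rw [FiniteField.algebraMap_norm_eq_prod_pow, hE, Finset.prod_range_succ, Finset.prod_range_one,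
    Nat.card_eq_fintype_card]
  ring

lemma trace_eq_zero_iff_of_finrank_eq_two (hE : finrank F E = 2) {x : E} (hx : x ≠ 0) :
    Algebra.trace F E x = 0 ↔ x ^ (Fintype.card F - 1) = -1 := by
  have := finite_of_finrank_eq_two hE
  have htrace : algebraMap F E (Algebra.trace F E x) = x * (x ^ (Fintype.card F - 1) + 1) := by
    rw [FiniteField.algebraMap_trace_eq_sum_pow, hE, Finset.sum_range_succ, Finset.sum_range_one,
      Nat.card_eq_fintype_card, mul_add, mul_pow_sub_one Fintype.card_ne_zero]
    ring
  rw [← map_eq_zero (algebraMap F E), htrace, mul_eq_zero, or_iff_right hx,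
    add_eq_zero_iff_eq_neg]

lemma card_sq_sub_one_dvd (hE : finrank F E = 2) : Fintype.card F ^ 2 - 1 ∣ Nat.card K - 1 := by
  have : Finite E := .of_injective _ (algebraMap E K).injective
  rw [natCard_eq_card_pow hE K, pow_mul]
  simpa using Nat.sub_dvd_pow_sub_pow (Fintype.card F ^ 2) 1 (finrank E K)

lemma exists_eq_sub_one_mul (hE : finrank F E = 2) {h : ℕ}
    (hh : (Fintype.card F + 1) * h = Nat.card K - 1) :
    ∃ n, (Fintype.card F ^ 2 - 1) * n = Nat.card K - 1 ∧ h = (Fintype.card F - 1) * n := by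
  obtain ⟨n, hn⟩ := card_sq_sub_one_dvd (K := K) hE
  refine ⟨n, hn.symm, Nat.eq_of_mul_eq_mul_left (Fintype.card F).succ_pos ?_⟩
  rw [Nat.succ_eq_add_one, hh, hn, ← mul_assoc, ← Nat.sq_sub_sq, one_pow]

lemma algebraMap_norm_eq_pow (hE : finrank F E = 2) {n : ℕ}
    (hn : (Fintype.card F ^ 2 - 1) * n = Nat.card K - 1) (x : K) :
    algebraMap E K (Algebra.norm E x) = x ^ n := by
  have : Finite E := .of_injective _ (algebraMap E K).injective
  have hd := Nat.pos_of_ne_zero (pow_exponents_ne_zero hn).1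
  rw [FiniteField.algebraMap_norm_eq_pow, natCard_eq_card_sq hE, ← hn, Nat.mul_div_cancel_left n hd]

end FiniteFieldTower

section TraceForm

variable {F : Type*} [Field F] [Fintype F] {K : Type*} [Field K] [Algebra F K]

variable (F) in
/-- The quadratic form `y ↦ Tr_{K/F}(c y^{q + 1})`, where `q = |F|`. Writing
`y^{q + 1} = y^q y`, it comes from the bilinear form `(x, y) ↦ Tr_{K/F}(c x^q y)`. -/
noncomputable def normTraceForm (c : K) : QuadraticForm F K :=
  LinearMap.BilinMap.toQuadraticMap <|
    (LinearMap.mul F K).compr₂ (Algebra.trace F K ∘ₗ LinearMap.mulLeft F c) ∘ₗ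
      (FiniteField.frobeniusAlgHom F K).toLinearMap

lemma normTraceForm_apply (c y : K) :
    normTraceForm F c y = Algebra.trace F K (c * y ^ (Fintype.card F + 1)) := by
  simp [normTraceForm, pow_succ]

variable [Finite K]

lemma trace_pow_card (x : K) :
    Algebra.trace F K (x ^ Fintype.card F) = Algebra.trace F K x :=
  Algebra.trace_eq_of_algEquiv (FiniteField.frobeniusAlgEquivOfAlgebraic F K) x

lemma polar_normTraceForm (c u v : K) :
    polar (normTraceForm F c) u v = Algebra.trace F K
      ((c ^ Fintype.card F * u ^ Fintype.card F ^ 2 + c * u) * v ^ Fintype.card F) := by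
  have hsymm : Algebra.trace F K (c * (u ^ Fintype.card F * v)) = Algebra.trace F K
      (c ^ Fintype.card F * u ^ Fintype.card F ^ 2 * v ^ Fintype.card F) := by
    rw [← trace_pow_card (F := F) (c * _)]
    ring_nf
  rw [normTraceForm, LinearMap.BilinMap.polar_toQuadraticMap, add_mul, map_add, ← hsymm]
  simp [mul_assoc, mul_comm u]

lemma forall_polar_normTraceForm_eq_zero_iff {c u : K} :
    (∀ v, polar (normTraceForm F c) u v = 0) ↔
      c ^ Fintype.card F * u ^ Fintype.card F ^ 2 + c * u = 0 := by
  simp_rw [polar_normTraceForm]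
  refine ⟨fun hu => (traceForm_nondegenerate F K).1 _ fun w => ?_, fun hu v => by
    rw [hu, zero_mul, map_zero]⟩
  obtain ⟨v, rfl⟩ := (FiniteField.frobeniusAlgEquivOfAlgebraic F K).surjective w
  exact hu v

variable {E : Type*} [Field E] [Algebra F E] [Algebra E K] [IsScalarTower F E K]

lemma isHermitianForm_normTraceForm (hE : finrank F E = 2) (c : K) :
    IsHermitianForm E (normTraceForm F c) := by
  intro a v
  have : Finite E := .of_injective _ (algebraMap E K).injective
  have hnorm : c * (a • v) ^ (Fintype.card F + 1) =
      Algebra.norm F a • (c * v ^ (Fintype.card F + 1)) := by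
    rw [Algebra.smul_def, Algebra.smul_def, mul_pow, ← map_pow,
      ← algebraMap_norm_eq_pow_card_add_one hE, ← IsScalarTower.algebraMap_apply]
    ring
  rw [normTraceForm_apply, hnorm, map_smul, normTraceForm_apply, smul_eq_mul]

lemma mem_radical_normTraceForm_iff (hE : finrank F E = 2) {c u : K} (hc : c ≠ 0) (hu : u ≠ 0) :
    u ∈ (isHermitianForm_normTraceForm (E := E) hE c).radical ↔
      c ^ (Fintype.card F - 1) * u ^ (Fintype.card F ^ 2 - 1) = -1 := by
  have : Finite E := .of_injective _ (algebraMap E K).injective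
  have hq : 0 < Fintype.card F := Fintype.card_pos
  have hfactor : c ^ Fintype.card F * u ^ Fintype.card F ^ 2 + c * u =
      c * u * (c ^ (Fintype.card F - 1) * u ^ (Fintype.card F ^ 2 - 1) + 1) := by
    rw [← pow_sub_one_mul hq.ne' c, ← pow_sub_one_mul (pow_pos hq 2).ne' u]
    ring
  rw [IsHermitianForm.mem_radical_iff _ hE, forall_polar_normTraceForm_eq_zero_iff, hfactor,
    mul_eq_zero, or_iff_right (mul_ne_zero hc hu), add_eq_zero_iff_eq_neg]

lemma exists_mem_radical_normTraceForm_iff (hE : finrank F E = 2) {h : ℕ}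
    (hh : (Fintype.card F + 1) * h = Nat.card K - 1) {c : K} (hc : c ≠ 0) :
    (∃ u ∈ (isHermitianForm_normTraceForm (E := E) hE c).radical, u ≠ 0) ↔
      c ^ h = (-1) ^ finrank E K := by
  have : Finite E := .of_injective _ (algebraMap E K).injective
  obtain ⟨n, hn, rfl⟩ := exists_eq_sub_one_mul (E := E) hE hh
  have hd := (pow_exponents_ne_zero hn).1
  have hneg : (-1 : K) ^ n = (-1) ^ finrank E K := by
    have hnorm := algebraMap_norm_eq_pow hE hn (-1)
    rw [← map_one (algebraMap E K), ← map_neg, Algebra.norm_algebraMap] at hnorm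
    simpa using hnorm.symm
  have hx : -(c ^ (Fintype.card F - 1))⁻¹ ≠ 0 := neg_ne_zero.2 (inv_ne_zero (pow_ne_zero _ hc))
  calc (∃ u ∈ (isHermitianForm_normTraceForm (E := E) hE c).radical, u ≠ 0)
      ↔ ∃ u, u ^ (Fintype.card F ^ 2 - 1) = -(c ^ (Fintype.card F - 1))⁻¹ := by
        refine exists_congr fun u => ?_
        obtain rfl | hu := eq_or_ne u 0
        · simp [hd, hx.symm]
        · rw [mem_radical_normTraceForm_iff hE hc hu, and_iff_left hu, ← eq_inv_mul_iff_mul_eq₀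
            (pow_ne_zero _ hc), mul_neg_one]
    _ ↔ (-(c ^ (Fintype.card F - 1))⁻¹) ^ n = 1 := exists_pow_eq_iff hn hx
    _ ↔ c ^ ((Fintype.card F - 1) * n) = (-1) ^ finrank E K := by
        rw [neg_pow, hneg, inv_pow, ← pow_mul, ← div_eq_mul_inv,
          div_eq_one_iff_eq (pow_ne_zero _ hc), eq_comm]

theorem finrank_radical_normTraceForm [DecidableEq K] (hE : finrank F E = 2) {h : ℕ}
    (hh : (Fintype.card F + 1) * h = Nat.card K - 1) {c : K} (hc : c ≠ 0) :
    finrank E (isHermitianForm_normTraceForm (E := E) hE c).radical =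
      if c ^ h = (-1) ^ finrank E K then 1 else 0 := by
  have : Finite E := .of_injective _ (algebraMap E K).injective
  split_ifs with hch
  · obtain ⟨u, hu, hu0⟩ := (exists_mem_radical_normTraceForm_iff hE hh hc).2 hch
    refine (finrank_eq_one_iff_of_nonzero' ⟨u, hu⟩ (by simpa using hu0)).2 fun ⟨v, hv⟩ => ?_
    obtain rfl | hv0 := eq_or_ne v 0
    · exact ⟨0, zero_smul E _⟩
    rw [mem_radical_normTraceForm_iff hE hc hu0] at hu
    rw [mem_radical_normTraceForm_iff hE hc hv0] at hv
    have huv : v ^ (Fintype.card F ^ 2 - 1) = u ^ (Fintype.card F ^ 2 - 1) :=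
      mul_left_cancel₀ (pow_ne_zero _ hc) (hv.trans hu.symm)
    have hfix : (v / u) ^ Nat.card E = v / u := by
      rw [natCard_eq_card_sq hE, ← pow_sub_one_mul (by simp), div_pow, huv,
        div_self (pow_ne_zero _ hu0), one_mul]
    obtain ⟨a, ha⟩ := mem_range_algebraMap_of_pow_natCard_eq hfix
    exact ⟨a, Subtype.ext (by simp [Algebra.smul_def, ha, hu0])⟩
  · rw [Submodule.finrank_eq_zero, Submodule.eq_bot_iff]
    by_contra! hne
    exact hch ((exists_mem_radical_normTraceForm_iff hE hh hc).1 hne)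

end TraceForm

section CodeWeight

/-- The common shape `(q - 1)(q^{k - 1} + (-q)^j) / (q + 1)` of the weights of the code over the
field with `q` elements, for `j = k / 2` and `j = k / 2 - 1`. -/
def codeWeight (q k j : ℕ) : ℚ := (q - 1) * (q ^ (k - 1) + (-q) ^ j) / (q + 1)

lemma codeWeight_injective {q : ℕ} (hq : 1 < q) (k : ℕ) : Function.Injective (codeWeight q k) := by
  intro i j hij
  have hq' : (1 : ℚ) < q := by exact_mod_cast hq
  have hpow : (-q : ℚ) ^ i = (-q) ^ j := by
    rw [codeWeight, codeWeight, div_left_inj' (by positivity), mul_right_inj' (by linarith),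
      add_right_inj] at hij
    exact hij
  have habs := congrArg abs hpow
  rw [abs_pow, abs_pow, abs_neg, Nat.abs_cast] at habs
  exact pow_right_injective₀ (by linarith) hq'.ne' habs

lemma codeWeight_ne_codeWeight_sub_one {q m : ℕ} (hq : 1 < q) (hm : m ≠ 0) (k : ℕ) :
    codeWeight q k m ≠ codeWeight q k (m - 1) :=
  (codeWeight_injective hq k).ne (by omega)

lemma codeWeight_of_odd (q k : ℕ) {j : ℕ} (hj : Odd j) :
    codeWeight q k j = ((q : ℚ) - 1) * ((q : ℚ) ^ (k - 1) - (q : ℚ) ^ j) / ((q : ℚ) + 1) := by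
  rw [codeWeight, hj.neg_pow, ← sub_eq_add_neg]

lemma codeWeight_of_even (q k : ℕ) {j : ℕ} (hj : Even j) :
    codeWeight q k j = ((q : ℚ) - 1) * ((q : ℚ) ^ (k - 1) + (q : ℚ) ^ j) / ((q : ℚ) + 1) := by
  rw [codeWeight, hj.neg_pow]

lemma codeWeight_le_of_odd_of_even {q : ℕ} (hq : 1 ≤ q) (k : ℕ) {i j : ℕ} (hi : Odd i)
    (hj : Even j) : codeWeight q k i ≤ codeWeight q k j := by
  have hq' : (0 : ℚ) ≤ q - 1 := sub_nonneg.2 (by exact_mod_cast hq)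
  rw [codeWeight, codeWeight, hi.neg_pow, hj.neg_pow]
  gcongr
  exact (neg_nonpos.2 (by positivity)).trans (by positivity)

end CodeWeight

section Code

variable {F E K : Type*} [Field F] [Field E] [Field K] [Algebra F E] [Algebra E K]

variable (F E K) in
/-- The defining set `D` of the code. The norm `N_{K/E}` is the power map
`x ↦ x^{(|K| - 1) / (|E| - 1)}`. -/
def definingSet : Set K := {d | d ≠ 0 ∧ Algebra.trace F E (Algebra.norm E d) = 0}

variable [Fintype F] [Finite K] {h : ℕ}

lemma mem_definingSet_iff (hE : finrank F E = 2) (hh : (Fintype.card F + 1) * h = Nat.card K - 1)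
    {d : K} : d ∈ definingSet F E K ↔ d ^ h = -1 := by
  have : Finite E := .of_injective _ (algebraMap E K).injective
  obtain rfl | hd := eq_or_ne d 0
  · simp [definingSet, (pow_exponents_ne_zero hh).2]
  obtain ⟨n, hn, rfl⟩ := exists_eq_sub_one_mul (E := E) hE hh
  calc d ∈ definingSet F E K ↔ Algebra.trace F E (Algebra.norm E d) = 0 := and_iff_right hd
    _ ↔ Algebra.norm E d ^ (Fintype.card F - 1) = -1 :=
        trace_eq_zero_iff_of_finrank_eq_two hE (Algebra.norm_ne_zero_iff.2 hd)
    _ ↔ d ^ ((Fintype.card F - 1) * n) = -1 := by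
        rw [← (algebraMap E K).injective.eq_iff, map_pow,
          algebraMap_norm_eq_pow hE hn, map_neg, map_one, ← pow_mul, mul_comm n]

variable [Algebra F K]

variable (F E) in
/-- The Hamming weight of the codeword `c_b = (Tr_{K/F}(b d))_{d ∈ D}`. -/
noncomputable def weight (b : K) : ℕ :=
  Nat.card {d : K // d ∈ definingSet F E K ∧ Algebra.trace F K (b * d) ≠ 0}

lemma card_add_one_mul_weight (hE : finrank F E = 2)
    (hh : (Fintype.card F + 1) * h = Nat.card K - 1) {a : K} (ha : a ^ h = -1) (b : K) :
    (Fintype.card F + 1) * weight F E b = Nat.card {y // normTraceForm F (b * a) y ≠ 0} := by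
  have ha0 : a ≠ 0 := by
    rintro rfl
    simp [(pow_exponents_ne_zero hh).2] at ha
  have hcount := card_comp_mul_pow hh ha0 (P := fun x => Algebra.trace F K (b * x) ≠ 0) (by simp)
  simp_rw [ha, ← mem_definingSet_iff hE hh] at hcount
  simp_rw [normTraceForm_apply, mul_assoc]
  exact hcount.symm

variable [IsScalarTower F E K]

theorem weight_eq_codeWeight [DecidableEq K] (hE : finrank F E = 2)
    (hh : (Fintype.card F + 1) * h = Nat.card K - 1) {b : K} (hb : b ≠ 0) :
    (weight F E b : ℚ) = codeWeight (Fintype.card F) (2 * finrank E K)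
      (if b ^ h = (-1) ^ (finrank E K + 1) then finrank E K else finrank E K - 1) := by
  obtain ⟨a, ha⟩ : ∃ a : K, a ^ h = -1 :=
    (exists_pow_eq_iff ((mul_comm _ _).trans hh) (by simp)).2 (neg_one_pow_card_add_one F)
  have ha0 : a ≠ 0 := by
    rintro rfl
    simp [(pow_exponents_ne_zero hh).2] at ha
  have hm : finrank E K ≠ 0 := finrank_pos.ne'
  have hcount := (isHermitianForm_normTraceForm (E := E) hE (b * a)).card_mul_card_ne_zero hE
  have hab : (b * a) ^ h = (-1) ^ finrank E K ↔ b ^ h = (-1) ^ (finrank E K + 1) := by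
    rw [mul_pow, ha, pow_succ, mul_neg_one, mul_neg_one, neg_eq_iff_eq_neg]
  rw [← card_add_one_mul_weight hE hh ha,
    finrank_radical_normTraceForm hE hh (mul_ne_zero hb ha0)] at hcount
  simp only [hab] at hcount
  have hq : (Fintype.card F : ℚ) ≠ 0 := by simp
  have hcount' := congrArg (Int.cast : ℤ → ℚ) hcount
  push_cast at hcount'
  have hpow : (Fintype.card F : ℚ) * Fintype.card F ^ (2 * finrank E K - 1) =
      Fintype.card F ^ (2 * finrank E K) := mul_pow_sub_one (by simpa using hm) _
  rw [codeWeight, eq_div_iff (by positivity), ← mul_right_inj' hq]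
  split_ifs at hcount' ⊢
  · rw [pow_succ] at hcount'
    linear_combination hcount' - ((Fintype.card F : ℚ) - 1) * hpow
  · rw [add_zero, ← mul_pow_sub_one hm] at hcount'
    linear_combination hcount' - ((Fintype.card F : ℚ) - 1) * hpow

lemma weight_eq_codeWeight_finrank_iff (hE : finrank F E = 2)
    (hh : (Fintype.card F + 1) * h = Nat.card K - 1) {b : K} (hb : b ≠ 0) :
    (weight F E b : ℚ) = codeWeight (Fintype.card F) (2 * finrank E K) (finrank E K) ↔
      b ^ h = (-1) ^ (finrank E K + 1) := by
  classical
  have hne := codeWeight_ne_codeWeight_sub_one (q := Fintype.card F) Fintype.one_lt_card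
    (finrank_pos (R := E) (M := K)).ne' (2 * finrank E K)
  rw [weight_eq_codeWeight hE hh hb]
  split_ifs with hbh <;> simp [hbh, hne.symm]

lemma weight_eq_codeWeight_finrank_sub_one_iff (hE : finrank F E = 2)
    (hh : (Fintype.card F + 1) * h = Nat.card K - 1) {b : K} (hb : b ≠ 0) :
    (weight F E b : ℚ) = codeWeight (Fintype.card F) (2 * finrank E K) (finrank E K - 1) ↔
      b ^ h ≠ (-1) ^ (finrank E K + 1) := by
  classical
  have hne := codeWeight_ne_codeWeight_sub_one (q := Fintype.card F) Fintype.one_lt_card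
    (finrank_pos (R := E) (M := K)).ne' (2 * finrank E K)
  rw [weight_eq_codeWeight hE hh hb]
  split_ifs with hbh <;> simp [hbh, hne]

theorem card_weight_eq_codeWeight_finrank (hE : finrank F E = 2)
    (hh : (Fintype.card F + 1) * h = Nat.card K - 1) :
    Nat.card {b : K // b ≠ 0 ∧
      (weight F E b : ℚ) = codeWeight (Fintype.card F) (2 * finrank E K) (finrank E K)} = h := by
  refine .trans (Nat.card_congr (Equiv.subtypeEquivRight fun b => ?_))
    (card_pow_eq ((mul_comm _ _).trans hh) (neg_one_pow_pow_card_add_one F (finrank E K + 1)))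
  obtain rfl | hb := eq_or_ne b 0
  · have hneg : (-1 : K) ^ (finrank E K + 1) ≠ 0 := by simp
    simp [(pow_exponents_ne_zero hh).2, hneg.symm]
  · rw [weight_eq_codeWeight_finrank_iff hE hh hb, and_iff_right hb]

theorem card_weight_eq_codeWeight_finrank_sub_one (hE : finrank F E = 2)
    (hh : (Fintype.card F + 1) * h = Nat.card K - 1) :
    Nat.card {b : K // b ≠ 0 ∧ (weight F E b : ℚ) =
      codeWeight (Fintype.card F) (2 * finrank E K) (finrank E K - 1)} = Fintype.card F * h := by
  refine .trans (Nat.card_congr (Equiv.subtypeEquivRight fun b => ?_)) ((card_ne_zero_and_pow_ne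
    ((mul_comm _ _).trans hh) (neg_one_pow_pow_card_add_one F (finrank E K + 1))).trans ?_)
  · exact and_congr_right (weight_eq_codeWeight_finrank_sub_one_iff hE hh)
  · rw [← hh, add_one_mul, Nat.add_sub_cancel]

end Code

lemma finrank_eq_of_natCard_eq_pow {F V : Type*} [Field F] [Fintype F] [AddCommGroup V]
    [Module F V] [Finite V] {n : ℕ} (hV : Nat.card V = Fintype.card F ^ n) : finrank F V = n := by
  rw [Module.natCard_eq_pow_finrank (K := F), Nat.card_eq_fintype_card] at hV
  exact Nat.pow_right_injective Fintype.one_lt_card hV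

theorem stmt7_general {F E K : Type*} [Field F] [Field E] [Field K] [Fintype F] [Finite K]
    [Algebra F E] [Algebra E K] [Algebra F K] [IsScalarTower F E K] {q k : ℕ}
    (hF : Fintype.card F = q) (hE : Nat.card E = q ^ 2) (hK : Nat.card K = q ^ k) :
    (Nat.card {b : K // b ≠ 0 ∧ (weight F E b : ℚ) = codeWeight q k (k / 2)} : ℚ) =
      ((q : ℚ) ^ k - 1) / (q + 1) ∧
    (Nat.card {b : K // b ≠ 0 ∧ (weight F E b : ℚ) = codeWeight q k (k / 2 - 1)} : ℚ) =
      (q : ℚ) * ((q : ℚ) ^ k - 1) / (q + 1) ∧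
    (∀ b : K, b ≠ 0 → (weight F E b : ℚ) = codeWeight q k (k / 2) ∨
      (weight F E b : ℚ) = codeWeight q k (k / 2 - 1)) ∧
    ∀ b : K, b ≠ 0 → min (codeWeight q k (k / 2)) (codeWeight q k (k / 2 - 1)) ≤ weight F E b := by
  subst hF
  have : Finite E := .of_injective _ (algebraMap E K).injective
  have hFE : finrank F E = 2 := finrank_eq_of_natCard_eq_pow hE
  obtain rfl : 2 * finrank E K = k := by
    rw [← finrank_eq_of_natCard_eq_pow hK, ← hFE, finrank_mul_finrank]
  obtain ⟨h, hh⟩ : Fintype.card F + 1 ∣ Nat.card K - 1 :=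
    (Dvd.intro _ (Nat.sq_sub_sq _ 1).symm).trans (card_sq_sub_one_dvd hFE)
  have hh' : (h : ℚ) = ((Fintype.card F : ℚ) ^ (2 * finrank E K) - 1) / (Fintype.card F + 1) := by
    have hcard : (Nat.card K : ℚ) - 1 = (Fintype.card F + 1) * h := by
      exact_mod_cast (Nat.cast_pred Nat.card_pos).symm.trans (congrArg Nat.cast hh)
    rw [hK, Nat.cast_pow] at hcard
    rw [hcard, mul_div_cancel_left₀ _ (by positivity)]
  rw [Nat.mul_div_cancel_left _ two_pos, card_weight_eq_codeWeight_finrank hFE hh.symm,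
    card_weight_eq_codeWeight_finrank_sub_one hFE hh.symm, Nat.cast_mul, hh', mul_div_assoc]
  have hweight (b : K) (hb : b ≠ 0) :
      (weight F E b : ℚ) = codeWeight (Fintype.card F) (2 * finrank E K) (finrank E K) ∨
      (weight F E b : ℚ) = codeWeight (Fintype.card F) (2 * finrank E K) (finrank E K - 1) := by
    rw [weight_eq_codeWeight_finrank_iff hFE hh.symm hb,
      weight_eq_codeWeight_finrank_sub_one_iff hFE hh.symm hb]
    exact em _
  exact ⟨rfl, rfl, hweight, fun b hb => min_le_iff.2 ((hweight b hb).imp Eq.ge Eq.ge)⟩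

/-- **Proposition 1, `k ≡ 2 (mod 4)`, `k > 2`.** Let `q` be a power of a
prime `p`, `k ≡ 2 (mod 4)`, `k > 2`, and
`D = {x ∈ F_{q^k}ˣ : Tr_{q²/q}(x^{(q^k-1)/(q²-1)}) = 0}`.  Then exactly `(q^k-1)/(q+1)`
nonzero `b` give weight `(q-1)(q^{k-1} - q^{k/2})/(q+1)`, exactly `q(q^k-1)/(q+1)` give
weight `(q-1)(q^{k-1} + q^{k/2-1})/(q+1)`, every nonzero codeword has one of these two
weights, and the minimum distance is the smaller weight. -/
theorem stmt7 (p e q k : ℕ) [Fact p.Prime] (he : 0 < e) (hq : q = p ^ e)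
    (hk4 : k % 4 = 2) (hk2 : 2 < k)
    (Fq Ff Fk : Type) [Field Fq] [Field Ff] [Field Fk]
    [Fintype Fq] [Fintype Ff] [Fintype Fk]
    [Algebra Fq Ff] [Algebra Ff Fk] [Algebra Fq Fk] [IsScalarTower Fq Ff Fk]
    (hcq : Fintype.card Fq = q) (hcf : Fintype.card Ff = q ^ 2)
    (hck : Fintype.card Fk = q ^ k)
    (hnorm : ∀ x : Fk,
      algebraMap Ff Fk (Algebra.norm Ff x) = x ^ ((q ^ k - 1) / (q ^ 2 - 1))) :
    (Nat.card {b : Fk // b ≠ 0 ∧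
        (Nat.card {d : Fk // (d ≠ 0 ∧ Algebra.trace Fq Ff (Algebra.norm Ff d) = 0) ∧
            Algebra.trace Fq Fk (b * d) ≠ 0} : ℚ)
          = ((q : ℚ) - 1) * ((q : ℚ) ^ (k - 1) - (q : ℚ) ^ (k / 2)) / ((q : ℚ) + 1)} : ℚ)
      = ((q : ℚ) ^ k - 1) / ((q : ℚ) + 1) ∧
    (Nat.card {b : Fk // b ≠ 0 ∧
        (Nat.card {d : Fk // (d ≠ 0 ∧ Algebra.trace Fq Ff (Algebra.norm Ff d) = 0) ∧
            Algebra.trace Fq Fk (b * d) ≠ 0} : ℚ)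
          = ((q : ℚ) - 1) * ((q : ℚ) ^ (k - 1) + (q : ℚ) ^ (k / 2 - 1)) / ((q : ℚ) + 1)} : ℚ)
      = (q : ℚ) * ((q : ℚ) ^ k - 1) / ((q : ℚ) + 1) ∧
    (∀ b : Fk, b ≠ 0 →
      (Nat.card {d : Fk // (d ≠ 0 ∧ Algebra.trace Fq Ff (Algebra.norm Ff d) = 0) ∧
          Algebra.trace Fq Fk (b * d) ≠ 0} : ℚ)
          = ((q : ℚ) - 1) * ((q : ℚ) ^ (k - 1) - (q : ℚ) ^ (k / 2)) / ((q : ℚ) + 1) ∨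
      (Nat.card {d : Fk // (d ≠ 0 ∧ Algebra.trace Fq Ff (Algebra.norm Ff d) = 0) ∧
          Algebra.trace Fq Fk (b * d) ≠ 0} : ℚ)
          = ((q : ℚ) - 1) * ((q : ℚ) ^ (k - 1) + (q : ℚ) ^ (k / 2 - 1)) / ((q : ℚ) + 1)) ∧
    (∀ b : Fk, b ≠ 0 →
      ((q : ℚ) - 1) * ((q : ℚ) ^ (k - 1) - (q : ℚ) ^ (k / 2)) / ((q : ℚ) + 1)
        ≤ (Nat.card {d : Fk // (d ≠ 0 ∧ Algebra.trace Fq Ff (Algebra.norm Ff d) = 0) ∧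
            Algebra.trace Fq Fk (b * d) ≠ 0} : ℚ)) := by
  have hodd : Odd (k / 2) := Nat.odd_iff.2 (by omega)
  have heven : Even (k / 2 - 1) := hodd.tsub_odd odd_one
  have hq1 : 1 ≤ q := hcq ▸ Fintype.card_pos
  have h := stmt7_general (K := Fk) hcq (Nat.card_eq_fintype_card.trans hcf)
    (Nat.card_eq_fintype_card.trans hck)
  rw [min_eq_left (codeWeight_le_of_odd_of_even hq1 k hodd heven), codeWeight_of_odd q k hodd,
    codeWeight_of_even q k heven] at h
  exact h
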